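/- For every positive integer ℓ, the variance of the demerit factor over all 2^ℓ binary sequences of length ℓ equals (16ℓ³ - 60ℓ² + 56ℓ)/(3ℓ⁴) if ℓ is even, and (16ℓ³ - 60ℓ² + 56ℓ - 12)/(3ℓ⁴) if ℓ is odd. -/

import Mathlib

/-! The idea: write `x_0, …, x_{ℓ-1}` for the terms of the sequence. Appending a term `x_n` to
the first `n` terms adds `x_n x_{n-s}` to the autocorrelation at shift `s`. Squaring, summing over
`1 ≤ s ≤ n` and iterating over `n` gives (`sum_corr_sq`)
`∑_{s ≥ 1} C(s)² = ∑_{k < ℓ} k + 2 V`, where `V` is the sum of `x_k x_b x_c x_{b+c-k}` over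
`b, c < k ≤ b + c`, `k < ℓ`. Since `C(-s) = C(s)` and `C(0) = ℓ`, the demerit factor is a constant
plus `4 V / ℓ²` (`ADF_eq`).

Using `x_b² = 1`, each monomial of `V` is a nontrivial character of the group `{±1}^ℓ`, and two
of them coincide exactly when the triples `(k, b, c)` agree up to exchanging `b` and `c`
(`oddSupp_eq_iff`). By orthogonality of characters (`sum_char_mul`), `V` has mean `0`, and its
second moment is the number of triples with `b = c` plus twice the number of triples with `b ≠ c`.
For a fixed `k` there are `k(k-1)/2` pairs `(b, c)`, of which `⌊k/2⌋` are diagonal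
(`sum_weight`), so the variance is `16/ℓ⁴ · ∑_{k < ℓ} (k(k-1) - ⌊k/2⌋)`, and summing this by the
parity of `ℓ` gives the two formulas. -/

open Finset Filter

noncomputable section

/-- The binary sequence of length `ℓ` determined by sign choices `ε`. -/
def seqOf (ℓ : ℕ) (ε : Fin ℓ → Bool) : ℤ → ℤ := fun j =>
  if h : 0 ≤ j ∧ j < (ℓ : ℤ) then (if ε ⟨j.toNat, by omega⟩ then 1 else -1) else 0

/-- Aperiodic autocorrelation of `f` at shift `s`. -/
def autocorr (f : ℤ → ℤ) (s : ℤ) : ℤ := ∑ᶠ j : ℤ, f (j + s) * f j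

/-- The sum of squares of all aperiodic autocorrelations. -/
def ssac (f : ℤ → ℤ) : ℝ := ∑ᶠ s : ℤ, ((autocorr f s : ℝ)) ^ 2

/-- The demerit factor of `f`. -/
def ADF (f : ℤ → ℤ) : ℝ :=
  (∑ᶠ s ∈ {s : ℤ | s ≠ 0}, ((autocorr f s : ℝ)) ^ 2) / (autocorr f 0 : ℝ) ^ 2

/-- Expectation of `v` over the `2^ℓ` binary sequences of length `ℓ`, each with
equal probability. -/
def expect (ℓ : ℕ) (v : (ℤ → ℤ) → ℝ) : ℝ :=
  (∑ ε : Fin ℓ → Bool, v (seqOf ℓ ε)) / 2 ^ ℓ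

/-- The `p`-th central moment of `v` over binary sequences of length `ℓ`. -/
def centralMoment (p ℓ : ℕ) (v : (ℤ → ℤ) → ℝ) : ℝ :=
  expect ℓ fun f => (v f - expect ℓ v) ^ p


/-! ### Characters of the sign cube -/

/-- The `i`-th coordinate of the sequence coded by `ε`, as a real number (`0` for `i ≥ ℓ`). -/
def coord (ℓ : ℕ) (ε : Fin ℓ → Bool) (i : ℕ) : ℝ := (seqOf ℓ ε (i : ℤ) : ℝ)

lemma coord_fin {ℓ : ℕ} (ε : Fin ℓ → Bool) (i : Fin ℓ) :
    coord ℓ ε i = if ε i then 1 else -1 := by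
  have h : (0 : ℤ) ≤ (i : ℕ) ∧ ((i : ℕ) : ℤ) < (ℓ : ℤ) := by
    have := i.2
    omega
  unfold coord seqOf
  rw [dif_pos h]
  simp only [Int.toNat_natCast, Fin.eta]
  split_ifs <;> norm_num

lemma coord_mul_self {ℓ : ℕ} (ε : Fin ℓ → Bool) {i : ℕ} (hi : i < ℓ) :
    coord ℓ ε i * coord ℓ ε i = 1 := by
  have := coord_fin ε ⟨i, hi⟩
  simp only at this
  rw [this]
  split_ifs <;> norm_num

/-- Orthogonality of the characters `∏ i ∈ A, x i` of the sign cube. -/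
lemma sum_char_mul {ℓ : ℕ} {A B : Finset ℕ} (hA : A ⊆ range ℓ) (hB : B ⊆ range ℓ) :
    ∑ ε : Fin ℓ → Bool, (∏ i ∈ A, coord ℓ ε i) * (∏ i ∈ B, coord ℓ ε i)
      = if A = B then (2 : ℝ) ^ ℓ else 0 := by
  let g : Fin ℓ → Bool → ℝ := fun i b =>
    (if (i : ℕ) ∈ A then (if b then 1 else -1) else 1) *
      (if (i : ℕ) ∈ B then (if b then 1 else -1) else 1)
  have key : ∀ (D : Finset ℕ), D ⊆ range ℓ → ∀ ε : Fin ℓ → Bool, ∏ i ∈ D, coord ℓ ε i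
      = ∏ i : Fin ℓ, (if (i : ℕ) ∈ D then (if ε i then (1 : ℝ) else -1) else 1) := by
    intro D hD ε
    have h1 : ∏ i ∈ D, coord ℓ ε i = ∏ i ∈ range ℓ, (if i ∈ D then coord ℓ ε i else 1) := by
      rw [Finset.prod_ite_mem, Finset.inter_eq_right.mpr hD]
    rw [h1, Finset.prod_range]
    refine Finset.prod_congr rfl fun i _ => ?_
    rw [coord_fin]
  have h2 : ∑ ε : Fin ℓ → Bool, (∏ i ∈ A, coord ℓ ε i) * (∏ i ∈ B, coord ℓ ε i)
      = ∏ i : Fin ℓ, ∑ b : Bool, g i b := by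
    rw [Finset.prod_univ_sum, Fintype.piFinset_univ]
    refine Finset.sum_congr rfl fun ε _ => ?_
    rw [key A hA, key B hB, ← Finset.prod_mul_distrib]
  rw [h2]
  split_ifs with hAB
  · subst hAB
    rw [Finset.prod_congr rfl (g := fun _ => (2 : ℝ))]
    · simp
    · intro i _
      simp only [g, Fintype.sum_bool]
      split_ifs <;> norm_num
  · obtain ⟨i, hi⟩ : ∃ i, ¬ (i ∈ A ↔ i ∈ B) := by
      by_contra! h
      exact hAB (Finset.ext h)
    have hil : i < ℓ := by
      by_cases h : i ∈ A
      · exact mem_range.1 (hA h)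
      · exact mem_range.1 (hB (by tauto))
    refine Finset.prod_eq_zero (Finset.mem_univ ⟨i, hil⟩) ?_
    simp only [g, Fintype.sum_bool]
    by_cases h : i ∈ A <;> by_cases h' : i ∈ B <;> simp_all

/-! ### The cross terms -/

/-- Ordered pairs `(b, c)` with `b, c < k ≤ b + c`. -/
def crossPairs (k : ℕ) : Finset (ℕ × ℕ) := (range k ×ˢ range k).filter fun p => k ≤ p.1 + p.2

/-- Triples `(k, (b, c))` with `b, c < k ≤ b + c` and `k < ℓ`; such a triple stands for the
additive quadruple `(b + c - k) + k = b + c`. -/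
def crossTriples (ℓ : ℕ) : Finset (Σ _ : ℕ, ℕ × ℕ) := (range ℓ).sigma crossPairs

lemma mem_crossPairs {k : ℕ} {p : ℕ × ℕ} :
    p ∈ crossPairs k ↔ p.1 < k ∧ p.2 < k ∧ k ≤ p.1 + p.2 := by
  simp [crossPairs, and_assoc]

lemma mem_crossTriples {ℓ k b c : ℕ} :
    (⟨k, (b, c)⟩ : Σ _ : ℕ, ℕ × ℕ) ∈ crossTriples ℓ ↔ k < ℓ ∧ b < k ∧ c < k ∧ k ≤ b + c := by
  simp [crossTriples, mem_crossPairs]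

/-- The monomial `x_k x_b x_c x_{b+c-k}`. -/
def mono (x : ℕ → ℝ) (t : Σ _ : ℕ, ℕ × ℕ) : ℝ :=
  x t.1 * x t.2.1 * x t.2.2 * x (t.2.1 + t.2.2 - t.1)

/-- The set of indices occurring to an odd power in `x_k x_b x_c x_{b+c-k}`. -/
def oddSupp (t : Σ _ : ℕ, ℕ × ℕ) : Finset ℕ :=
  if t.2.1 = t.2.2 then {t.1, t.2.1 + t.2.2 - t.1}
  else {t.1, t.2.1, t.2.2, t.2.1 + t.2.2 - t.1}

lemma oddSupp_subset {ℓ : ℕ} {t : Σ _ : ℕ, ℕ × ℕ} (ht : t ∈ crossTriples ℓ) :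
    oddSupp t ⊆ range ℓ := by
  obtain ⟨k, b, c⟩ := t
  rw [mem_crossTriples] at ht
  intro i hi
  unfold oddSupp at hi
  split_ifs at hi <;> simp only [mem_insert, mem_singleton, mem_range] at hi ⊢ <;> omega

lemma oddSupp_ne_empty (t : Σ _ : ℕ, ℕ × ℕ) : oddSupp t ≠ ∅ := by
  unfold oddSupp
  split_ifs <;> simp

lemma mono_eq_prod {ℓ : ℕ} (ε : Fin ℓ → Bool) {t : Σ _ : ℕ, ℕ × ℕ} (ht : t ∈ crossTriples ℓ) :
    mono (coord ℓ ε) t = ∏ i ∈ oddSupp t, coord ℓ ε i := by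
  obtain ⟨k, b, c⟩ := t
  rw [mem_crossTriples] at ht
  unfold mono oddSupp
  simp only
  split_ifs with h
  · subst h
    rw [prod_pair (by omega), mul_assoc (coord ℓ ε k), coord_mul_self ε (by omega), mul_one]
  · rw [prod_insert, prod_insert, prod_insert, prod_singleton]
    · ring
    all_goals simp only [mem_insert, mem_singleton]; omega

/-- An additive quadruple `a + k = b + c` is determined by its odd support up to exchanging
`b` and `c`: the largest element is `k`, and for `b ≠ c` the next two are `b` and `c`. -/
lemma oddSupp_eq_iff {ℓ k b c k' b' c' : ℕ}
    (h : (⟨k, (b, c)⟩ : Σ _ : ℕ, ℕ × ℕ) ∈ crossTriples ℓ)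
    (h' : (⟨k', (b', c')⟩ : Σ _ : ℕ, ℕ × ℕ) ∈ crossTriples ℓ) :
    oddSupp ⟨k, (b, c)⟩ = oddSupp ⟨k', (b', c')⟩ ↔
      k = k' ∧ ((b = b' ∧ c = c') ∨ (b = c' ∧ c = b')) := by
  rw [mem_crossTriples] at h h'
  constructor
  · intro e
    have e' : ∀ i, i ∈ oddSupp ⟨k, (b, c)⟩ ↔ i ∈ oddSupp ⟨k', (b', c')⟩ := fun i => by rw [e]
    unfold oddSupp at e'
    simp only at e'
    have hk : k = k' := by
      have e1 := (e' k).1 (by split_ifs <;> simp)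
      have e2 := (e' k').2 (by split_ifs <;> simp)
      split_ifs at e1 e2 <;> simp only [mem_insert, mem_singleton] at e1 e2 <;> omega
    subst hk
    refine ⟨rfl, ?_⟩
    split_ifs at e' with h1 h2 h2 <;> simp only [mem_insert, mem_singleton] at e'
    · have := (e' (b + c - k)).1 (by simp)
      omega
    · have e1 := (e' b').2 (by simp)
      have e2 := (e' c').2 (by simp)
      omega
    · have e1 := (e' b).1 (by simp)
      have e2 := (e' c).1 (by simp)
      omega
    · have e1 := (e' b).1 (by simp)
      have e2 := (e' c).1 (by simp)
      have e3 := (e' b').2 (by simp)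
      have e4 := (e' c').2 (by simp)
      omega
  · rintro ⟨rfl, ⟨rfl, rfl⟩ | ⟨rfl, rfl⟩⟩
    · rfl
    · unfold oddSupp
      simp only
      by_cases hbc : b = c
      · subst hbc
        rfl
      · rw [if_neg hbc, if_neg (Ne.symm hbc), Nat.add_comm c b, Finset.insert_comm b c]

/-- Number of cross pairs, each weighted by the size of its orbit under the swap. -/
lemma sum_weight (k : ℕ) :
    ∑ p ∈ crossPairs k, (if p.1 = p.2 then (1 : ℝ) else 2)
      = (k : ℝ) * ((k : ℝ) - 1) - ((k / 2 : ℕ) : ℝ) := by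
  have h1 : (((crossPairs k).card : ℕ) : ℝ) * 2 = (k : ℝ) * ((k : ℝ) - 1) := by
    have : (crossPairs k).card = ∑ b ∈ range k, b := by
      unfold crossPairs
      rw [Finset.card_filter, Finset.sum_product]
      refine Finset.sum_congr rfl fun b hb => ?_
      rw [← Finset.card_filter]
      have : (range k).filter (fun c => k ≤ b + c) = Ico (k - b) k := by
        ext c
        simp only [mem_filter, mem_range, mem_Ico]
        omega
      rw [this, Nat.card_Ico]
      have := mem_range.1 hb
      omega
    rw [this]
    clear this
    induction k with
    | zero => simp
    | succ n ih =>
      rw [Finset.sum_range_succ, Nat.cast_add, add_mul, ih]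
      push_cast
      ring
  have h2 : ((crossPairs k).filter (fun p => p.1 = p.2)).card = k / 2 := by
    have : (crossPairs k).filter (fun p => p.1 = p.2)
        = (Ico ((k + 1) / 2) k).image (fun b => (b, b)) := by
      ext ⟨b, c⟩
      simp only [mem_filter, mem_crossPairs, mem_image, mem_Ico, Prod.mk.injEq]
      constructor
      · rintro ⟨h, rfl⟩
        exact ⟨b, by omega, rfl, rfl⟩
      · rintro ⟨d, h, rfl, rfl⟩
        exact ⟨by omega, rfl⟩
    rw [this, Finset.card_image_of_injective _ (fun a b h => (Prod.mk.inj h).1), Nat.card_Ico]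
    omega
  have h3 : ∀ p : ℕ × ℕ, (if p.1 = p.2 then (1 : ℝ) else 2)
      = 2 - (if p.1 = p.2 then (1 : ℝ) else 0) := by
    intro p
    split_ifs <;> norm_num
  simp_rw [h3]
  rw [Finset.sum_sub_distrib, Finset.sum_const, nsmul_eq_mul, h1, Finset.sum_boole, h2]

/-- The sum of all cross terms. -/
def crossSum (ℓ : ℕ) (x : ℕ → ℝ) : ℝ := ∑ t ∈ crossTriples ℓ, mono x t

lemma sum_crossSum (ℓ : ℕ) : ∑ ε : Fin ℓ → Bool, crossSum ℓ (coord ℓ ε) = 0 := by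
  unfold crossSum
  rw [Finset.sum_comm]
  refine Finset.sum_eq_zero fun t ht => ?_
  have := sum_char_mul (oddSupp_subset ht) (Finset.empty_subset (range ℓ))
  rw [if_neg (oddSupp_ne_empty t)] at this
  rw [← this]
  refine Finset.sum_congr rfl fun ε _ => ?_
  rw [mono_eq_prod ε ht, Finset.prod_empty, mul_one]

lemma sum_crossSum_sq (ℓ : ℕ) :
    ∑ ε : Fin ℓ → Bool, crossSum ℓ (coord ℓ ε) ^ 2
      = 2 ^ ℓ * ∑ k ∈ range ℓ, ((k : ℝ) * ((k : ℝ) - 1) - ((k / 2 : ℕ) : ℝ)) := by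
  have h1 : ∀ ε : Fin ℓ → Bool, crossSum ℓ (coord ℓ ε) ^ 2
      = ∑ t ∈ crossTriples ℓ, ∑ u ∈ crossTriples ℓ,
        (∏ i ∈ oddSupp t, coord ℓ ε i) * (∏ i ∈ oddSupp u, coord ℓ ε i) := by
    intro ε
    unfold crossSum
    rw [sq, Finset.sum_mul_sum]
    refine Finset.sum_congr rfl fun t ht => Finset.sum_congr rfl fun u hu => ?_
    rw [mono_eq_prod ε ht, mono_eq_prod ε hu]
  simp_rw [h1]
  rw [Finset.sum_comm]
  have h2 : ∀ t ∈ crossTriples ℓ, ∑ ε : Fin ℓ → Bool, ∑ u ∈ crossTriples ℓ,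
        (∏ i ∈ oddSupp t, coord ℓ ε i) * (∏ i ∈ oddSupp u, coord ℓ ε i)
      = 2 ^ ℓ * (if t.2.1 = t.2.2 then (1 : ℝ) else 2) := by
    intro t ht
    rw [Finset.sum_comm]
    have : ∀ u ∈ crossTriples ℓ, ∑ ε : Fin ℓ → Bool,
        (∏ i ∈ oddSupp t, coord ℓ ε i) * (∏ i ∈ oddSupp u, coord ℓ ε i)
        = if oddSupp t = oddSupp u then (2 : ℝ) ^ ℓ else 0 := fun u hu =>
      sum_char_mul (oddSupp_subset ht) (oddSupp_subset hu)
    rw [Finset.sum_congr rfl this, ← Finset.sum_filter, Finset.sum_const, nsmul_eq_mul, mul_comm]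
    congr 1
    obtain ⟨k, b, c⟩ := t
    have h3 : (crossTriples ℓ).filter (fun u => oddSupp ⟨k, (b, c)⟩ = oddSupp u)
        = {⟨k, (b, c)⟩, ⟨k, (c, b)⟩} := by
      ext ⟨k', b', c'⟩
      have hs : (⟨k, (c, b)⟩ : Σ _ : ℕ, ℕ × ℕ) ∈ crossTriples ℓ := by
        rw [mem_crossTriples] at ht ⊢
        omega
      rw [mem_filter]
      simp only [mem_insert, mem_singleton, Sigma.mk.injEq, heq_eq_eq, Prod.mk.injEq]
      constructor
      · rintro ⟨h, e⟩
        have := (oddSupp_eq_iff ht h).1 e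
        omega
      · intro e
        have h' : (⟨k', (b', c')⟩ : Σ _ : ℕ, ℕ × ℕ) ∈ crossTriples ℓ := by
          rw [mem_crossTriples] at ht ⊢
          omega
        exact ⟨h', (oddSupp_eq_iff ht h').2 (by omega)⟩
    rw [h3]
    simp only
    split_ifs with hbc
    · subst hbc
      simp
    · rw [Finset.card_pair]
      · norm_num
      · simp [hbc]
  rw [Finset.sum_congr rfl h2, ← Finset.mul_sum]
  congr 1
  unfold crossTriples
  rw [Finset.sum_sigma]
  exact Finset.sum_congr rfl fun k _ => sum_weight k

/-! ### The sum of squared autocorrelations -/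

/-- Autocorrelation at shift `s` of the first `n` terms of `x`. -/
def corr (x : ℕ → ℝ) (n s : ℕ) : ℝ := ∑ j ∈ range (n - s), x (j + s) * x j

/-- Appending `x_n` changes the autocorrelation at shift `s` by `x_n x_{n-s}`; squaring and
summing over `s`, the cross terms are the `x_k x_b x_c x_{b+c-k}` with `k = n`. -/
lemma sum_corr_sq (x : ℕ → ℝ) (n : ℕ) (hx : ∀ i < n, x i * x i = 1) :
    ∑ s ∈ Ico 1 n, corr x n s ^ 2 = (∑ k ∈ range n, (k : ℝ)) + 2 * crossSum n x := by
  induction n with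
  | zero => simp [crossSum, crossTriples, Finset.sum_sigma]
  | succ n ih =>
    have ih := ih fun i hi => hx i (by omega)
    have h1 : ∀ s ∈ Ico 1 (n + 1), corr x (n + 1) s ^ 2
        = corr x n s ^ 2 + 2 * (x n * x (n - s) * corr x n s) + 1 := by
      intro s hs
      have hs := mem_Ico.1 hs
      have e : n + 1 - s = (n - s) + 1 := by omega
      have e2 : n - s + s = n := by omega
      have : corr x (n + 1) s = corr x n s + x n * x (n - s) := by
        unfold corr
        rw [e, Finset.sum_range_succ, e2]
      rw [this]
      have a := hx n (by omega)
      have b := hx (n - s) (by omega)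
      linear_combination (x (n - s) * x (n - s)) * a + b
    have h2 : ∑ s ∈ Ico 1 (n + 1), corr x n s ^ 2 = ∑ s ∈ Ico 1 n, corr x n s ^ 2 := by
      rcases Nat.eq_zero_or_pos n with h | h
      · subst h
        simp
      · rw [Finset.sum_Ico_succ_top h]
        simp [corr]
    have h3 : ∑ s ∈ Ico 1 (n + 1), x n * x (n - s) * corr x n s
        = ∑ p ∈ crossPairs n, mono x ⟨n, p⟩ := by
      unfold corr
      simp_rw [Finset.mul_sum]
      rw [Finset.sum_sigma']
      refine Finset.sum_bij' (fun q _ => (n - q.1, q.2 + q.1))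
        (fun p _ => ⟨n - p.1, p.2 + p.1 - n⟩) ?_ ?_ ?_ ?_ ?_
      · rintro ⟨s, j⟩ h
        simp only [mem_sigma, mem_Ico, mem_range] at h
        rw [mem_crossPairs]
        simp only
        omega
      · rintro ⟨b, c⟩ h
        rw [mem_crossPairs] at h
        simp only [mem_sigma, mem_Ico, mem_range] at h ⊢
        omega
      · rintro ⟨s, j⟩ h
        simp only [mem_sigma, mem_Ico, mem_range] at h
        simp only [Sigma.mk.injEq, heq_eq_eq]
        omega
      · rintro ⟨b, c⟩ h
        rw [mem_crossPairs] at h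
        simp only at h
        simp only [Prod.mk.injEq]
        omega
      · rintro ⟨s, j⟩ h
        simp only [mem_sigma, mem_Ico, mem_range] at h
        unfold mono
        simp only
        have e : n - s + (j + s) - n = j := by omega
        rw [e]
        ring
    have h4 : crossSum (n + 1) x = crossSum n x + ∑ p ∈ crossPairs n, mono x ⟨n, p⟩ := by
      unfold crossSum crossTriples
      rw [Finset.sum_sigma, Finset.sum_sigma, Finset.sum_range_succ]
    rw [Finset.sum_congr rfl h1, Finset.sum_add_distrib, Finset.sum_add_distrib, h2, ih,
      ← Finset.mul_sum, h3, h4, Finset.sum_range_succ]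
    simp
    ring

lemma seqOf_eq_zero {ℓ : ℕ} (ε : Fin ℓ → Bool) {j : ℤ} (h : ¬ (0 ≤ j ∧ j < (ℓ : ℤ))) :
    seqOf ℓ ε j = 0 := by
  unfold seqOf
  rw [dif_neg h]

lemma autocorr_nat {ℓ : ℕ} (ε : Fin ℓ → Bool) (s : ℕ) :
    (autocorr (seqOf ℓ ε) (s : ℤ) : ℝ) = corr (coord ℓ ε) ℓ s := by
  have h : autocorr (seqOf ℓ ε) (s : ℤ)
      = ∑ j ∈ (range (ℓ - s)).map Nat.castEmbedding, seqOf ℓ ε (j + s) * seqOf ℓ ε j := by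
    unfold autocorr
    refine finsum_eq_sum_of_support_subset _ fun j hj => ?_
    rw [Function.mem_support] at hj
    have h1 : 0 ≤ j + s ∧ j + s < (ℓ : ℤ) := by
      by_contra h
      exact hj (by rw [seqOf_eq_zero ε h, zero_mul])
    have h2 : 0 ≤ j ∧ j < (ℓ : ℤ) := by
      by_contra h
      exact hj (by rw [seqOf_eq_zero ε h, mul_zero])
    simp only [coe_map, Set.mem_image, mem_coe, mem_range, Nat.castEmbedding_apply]
    exact ⟨j.toNat, by omega, by omega⟩
  rw [h, Finset.sum_map]
  unfold corr coord
  push_cast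
  rfl

lemma autocorr_neg (f : ℤ → ℤ) (s : ℤ) : autocorr f (-s) = autocorr f s := by
  unfold autocorr
  rw [← finsum_comp_equiv (Equiv.addRight s)]
  refine finsum_congr fun j => ?_
  simp [mul_comm]

lemma autocorr_zero {ℓ : ℕ} (ε : Fin ℓ → Bool) : (autocorr (seqOf ℓ ε) 0 : ℝ) = ℓ := by
  have := autocorr_nat ε 0
  rw [Nat.cast_zero] at this
  rw [this]
  unfold corr
  rw [Finset.sum_congr rfl (g := fun _ => (1 : ℝ))]
  · simp
  · intro j hj
    exact coord_mul_self ε (by simpa using hj)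

lemma ADF_eq {ℓ : ℕ} (ε : Fin ℓ → Bool) :
    ADF (seqOf ℓ ε)
      = 2 * (∑ k ∈ range ℓ, (k : ℝ)) / (ℓ : ℝ) ^ 2
        + 4 / (ℓ : ℝ) ^ 2 * crossSum ℓ (coord ℓ ε) := by
  have hz : ∀ s : ℕ, ℓ ≤ s → (autocorr (seqOf ℓ ε) (s : ℤ) : ℝ) = 0 := by
    intro s hs
    rw [autocorr_nat, corr, Nat.sub_eq_zero_of_le hs, range_zero, sum_empty]
  let g : ℤ → ℝ := fun s => (autocorr (seqOf ℓ ε) s : ℝ) ^ 2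
  let P : Finset ℤ := (Ico 1 ℓ).image (fun s : ℕ => (s : ℤ))
  let N : Finset ℤ := (Ico 1 ℓ).image (fun s : ℕ => -(s : ℤ))
  have h1 : ∑ᶠ s ∈ {s : ℤ | s ≠ 0}, g s = ∑ s ∈ P ∪ N, g s := by
    refine finsum_mem_eq_sum_of_inter_support_eq _ ?_
    ext s
    simp only [Set.mem_inter_iff, Set.mem_ofPred_eq, mem_coe, and_congr_left_iff,
      Function.mem_support]
    intro hs
    have hlt : s.natAbs < ℓ := by
      by_contra hle
      apply hs
      have := hz s.natAbs (by omega)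
      rcases Int.natAbs_eq s with h | h
      · simp only [g]
        rw [h, this]
        norm_num
      · simp only [g]
        rw [h, autocorr_neg, this]
        norm_num
    simp only [P, N, mem_union, mem_image, mem_Ico]
    constructor
    · intro h
      rcases lt_or_gt_of_ne h with h | h
      · exact Or.inr ⟨s.natAbs, by omega, by omega⟩
      · exact Or.inl ⟨s.natAbs, by omega, by omega⟩
    · rintro (⟨a, h, rfl⟩ | ⟨a, h, rfl⟩) <;> omega
  have hd : Disjoint P N := by
    rw [Finset.disjoint_left]
    intro s hP hN
    simp only [P, N, mem_image, mem_Ico] at hP hN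
    obtain ⟨a, ha, rfl⟩ := hP
    obtain ⟨b, hb, hab⟩ := hN
    omega
  have hP : ∑ s ∈ P, g s = ∑ s ∈ Ico 1 ℓ, corr (coord ℓ ε) ℓ s ^ 2 := by
    rw [Finset.sum_image (fun a _ b _ h => by simpa using h)]
    refine Finset.sum_congr rfl fun s _ => ?_
    simp only [g, autocorr_nat]
  have hN : ∑ s ∈ N, g s = ∑ s ∈ Ico 1 ℓ, corr (coord ℓ ε) ℓ s ^ 2 := by
    rw [Finset.sum_image (fun a _ b _ h => by simpa using h)]
    refine Finset.sum_congr rfl fun s _ => ?_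
    simp only [g, autocorr_neg, autocorr_nat]
  have h2 := sum_corr_sq (coord ℓ ε) ℓ fun i hi => coord_mul_self ε hi
  have h3 : ADF (seqOf ℓ ε) = (∑ᶠ s ∈ {s : ℤ | s ≠ 0}, g s) / (ℓ : ℝ) ^ 2 := by
    unfold ADF
    rw [autocorr_zero]
  rw [h3, h1, Finset.sum_union hd, hP, hN, h2]
  ring

/-! ### The variance -/

lemma centralMoment_ADF (ℓ : ℕ) :
    centralMoment 2 ℓ ADF = 16 / (ℓ : ℝ) ^ 4 *
      ∑ k ∈ range ℓ, ((k : ℝ) * ((k : ℝ) - 1) - ((k / 2 : ℕ) : ℝ)) := by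
  have hpos : (2 : ℝ) ^ ℓ ≠ 0 := by positivity
  have hmean : expect ℓ ADF = 2 * (∑ k ∈ range ℓ, (k : ℝ)) / (ℓ : ℝ) ^ 2 := by
    unfold _root_.expect
    simp_rw [ADF_eq]
    rw [Finset.sum_add_distrib, ← Finset.mul_sum, sum_crossSum, Finset.sum_const]
    simp only [Finset.card_univ, Fintype.card_pi, Fintype.card_bool, Finset.prod_const,
      Fintype.card_fin, nsmul_eq_mul, mul_zero, add_zero, Nat.cast_pow, Nat.cast_ofNat]
    rw [mul_div_cancel_left₀ _ hpos]
  unfold centralMoment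
  rw [hmean]
  unfold _root_.expect
  simp_rw [ADF_eq, add_sub_cancel_left, mul_pow]
  rw [← Finset.mul_sum, sum_crossSum_sq, mul_left_comm, mul_div_cancel_left₀ _ hpos]
  ring

/-- Closed form of the count for `2m` and `2m + 1` terms. -/
lemma sum_closed (m : ℕ) :
    (∑ k ∈ range (2 * m), ((k : ℝ) * ((k : ℝ) - 1) - ((k / 2 : ℕ) : ℝ))
      = 2 * m * (2 * m - 1) * (2 * m - 2) / 3 - m * (m - 1)) ∧
    (∑ k ∈ range (2 * m + 1), ((k : ℝ) * ((k : ℝ) - 1) - ((k / 2 : ℕ) : ℝ))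
      = (2 * m + 1) * (2 * m) * (2 * m - 1) / 3 - m ^ 2) := by
  have step : ∀ m : ℕ, (∑ k ∈ range (2 * m), ((k : ℝ) * ((k : ℝ) - 1) - ((k / 2 : ℕ) : ℝ))
      = 2 * m * (2 * m - 1) * (2 * m - 2) / 3 - m * (m - 1)) →
    (∑ k ∈ range (2 * m + 1), ((k : ℝ) * ((k : ℝ) - 1) - ((k / 2 : ℕ) : ℝ))
      = (2 * m + 1) * (2 * m) * (2 * m - 1) / 3 - m ^ 2) := by
    intro m h
    have e : 2 * m / 2 = m := by omega
    rw [Finset.sum_range_succ, h, e]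
    push_cast
    ring
  induction m with
  | zero => exact ⟨by simp, by simp⟩
  | succ m ih =>
    have h : ∑ k ∈ range (2 * (m + 1)), ((k : ℝ) * ((k : ℝ) - 1) - ((k / 2 : ℕ) : ℝ))
        = 2 * (m + 1 : ℕ) * (2 * (m + 1 : ℕ) - 1) * (2 * (m + 1 : ℕ) - 2) / 3
          - (m + 1 : ℕ) * ((m + 1 : ℕ) - 1) := by
      have e : (2 * m + 1) / 2 = m := by omega
      rw [show 2 * (m + 1) = 2 * m + 1 + 1 by ring, Finset.sum_range_succ, ih.2, e]
      push_cast
      ring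
    exact ⟨h, step _ h⟩

/-- Jedwab 2019: the variance of the demerit factor over all binary sequences of
length `ℓ`. -/
theorem variance_ADF (ℓ : ℕ) (hℓ : 0 < ℓ) :
    (Even ℓ → centralMoment 2 ℓ ADF =
      (16 * (ℓ : ℝ) ^ 3 - 60 * (ℓ : ℝ) ^ 2 + 56 * (ℓ : ℝ)) / (3 * (ℓ : ℝ) ^ 4)) ∧
    (Odd ℓ → centralMoment 2 ℓ ADF =
      (16 * (ℓ : ℝ) ^ 3 - 60 * (ℓ : ℝ) ^ 2 + 56 * (ℓ : ℝ) - 12) / (3 * (ℓ : ℝ) ^ 4)) := by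
  have hl : (ℓ : ℝ) ≠ 0 := by positivity
  rw [centralMoment_ADF]
  constructor
  · rintro ⟨m, hm⟩
    have hm : ℓ = 2 * m := by omega
    rw [hm, (sum_closed m).1, ← hm]
    have hm' : (ℓ : ℝ) = 2 * m := by rw [hm]; push_cast; ring
    rw [div_mul_eq_mul_div, div_eq_div_iff (by positivity) (by positivity)]
    rw [hm']
    ring
  · rintro ⟨m, hm⟩
    rw [hm, (sum_closed m).2, ← hm]
    have hm' : (ℓ : ℝ) = 2 * m + 1 := by rw [hm]; push_cast; ring
    rw [div_mul_eq_mul_div, div_eq_div_iff (by positivity) (by positivity)]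
    rw [hm']
    ring
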